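/- Let 0 < a ≤ b and x ∈ ℝ. There exists a constant C > 0, depending only on a, b, x, such that for all real numbers t < T with T − t ≤ 1, all log-strikes k with |x − k| ≤ b²(T−t)/2, all λ in (max(e^x − e^k, 0), e^x) with BS^{−1}(t,T,x,k,λ) ∈ [a,b], and each n ∈ {4,5,6}, the n-th derivative of the inverse Black–Scholes map with respect to the price argument satisfies |(BS^{−1})^{(n)}(t,T,x,k,λ)| ≤ C (T−t)^{−(n−2)/2}. -/

import Mathlib

noncomputable section

/-- Standard normal density. -/
def phi (z : ℝ) : ℝ := (Real.sqrt (2 * Real.pi))⁻¹ * Real.exp (-z ^ 2 / 2)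

/-- Standard normal cumulative distribution function. -/
def N (y : ℝ) : ℝ := ∫ z in Set.Iic y, phi z

/-- Black–Scholes auxiliary quantity `d₁`. -/
def d1 (t T x k σ : ℝ) : ℝ :=
  (x - k) / (σ * Real.sqrt (T - t)) + σ * Real.sqrt (T - t) / 2

/-- Black–Scholes auxiliary quantity `d₂`. -/
def d2 (t T x k σ : ℝ) : ℝ :=
  (x - k) / (σ * Real.sqrt (T - t)) - σ * Real.sqrt (T - t) / 2

/-- Black–Scholes call price with log-spot `x`, log-strike `k`,
time to maturity `T - t` and volatility `σ`. -/
def BS (t T x k σ : ℝ) : ℝ :=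
  Real.exp x * N (d1 t T x k σ) - Real.exp k * N (d2 t T x k σ)

/-- Inverse of the Black–Scholes price in the volatility argument on `(0, ∞)`. -/
def BSinv (t T x k l : ℝ) : ℝ := Function.invFunOn (BS t T x k) (Set.Ioi 0) l

open ProbabilityTheory MeasureTheory Filter Topology

lemma phi_eq : phi = gaussianPDFReal 0 1 := by
  ext z; simp [phi, gaussianPDFReal]

lemma phi_pos (z : ℝ) : 0 < phi z := by unfold phi; positivity

lemma N_eq (y : ℝ) : N y = cdf (gaussianReal 0 1) y := by
  rw [cdf_eq_real, N, phi_eq, gaussianReal_of_var_ne_zero _ one_ne_zero, measureReal_def,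
    withDensity_apply _ measurableSet_Iic]
  rw [integral_eq_lintegral_of_nonneg_ae]
  · rfl
  · exact Eventually.of_forall fun z => gaussianPDFReal_nonneg _ _ _
  · exact (measurable_gaussianPDFReal 0 1).aestronglyMeasurable

lemma N_top : Tendsto N atTop (𝓝 1) := by
  rw [show N = cdf (gaussianReal 0 1) from funext N_eq]; exact tendsto_cdf_atTop _

lemma N_bot : Tendsto N atBot (𝓝 0) := by
  rw [show N = cdf (gaussianReal 0 1) from funext N_eq]; exact tendsto_cdf_atBot _

lemma phi_cont : Continuous phi := by unfold phi; fun_prop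

lemma phi_int : Integrable phi := by rw [phi_eq]; exact integrable_gaussianPDFReal 0 1

lemma N_deriv (y : ℝ) : HasDerivAt N (phi y) y := by
  have h : N = fun y => N 0 + ∫ z in (0:ℝ)..y, phi z := by
    ext y
    have := intervalIntegral.integral_Iic_sub_Iic (phi_int.integrableOn (s := Set.Iic 0))
      (phi_int.integrableOn (s := Set.Iic y))
    rw [← this]; simp [N]
  rw [h]
  exact (intervalIntegral.integral_hasDerivAt_right (phi_cont.intervalIntegrable _ _)
    (phi_cont.stronglyMeasurableAtFilter _ _) phi_cont.continuousAt).const_add _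

lemma BS_deriv {t T x k σ : ℝ} (hT : t < T) (hσ : 0 < σ) :
    HasDerivAt (BS t T x k) (Real.exp x * phi (d1 t T x k σ) * Real.sqrt (T - t)) σ := by
  set s := Real.sqrt (T - t) with hs
  have hs0 : 0 < s := Real.sqrt_pos.2 (by linarith)
  have e1 : HasDerivAt (d1 t T x k) (-(x - k) / (σ ^ 2 * s) + s / 2) σ := by
    unfold d1
    have h := (((hasDerivAt_id σ).mul_const s).fun_inv (mul_pos hσ hs0).ne').const_mul (x - k)
    have h2 := h.add (((hasDerivAt_id σ).mul_const s).div_const 2)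
    refine (h2.congr_deriv ?_).congr_of_eventuallyEq ?_
    · simp only [id]; field_simp
    · exact Eventually.of_forall fun z => by simp [div_eq_mul_inv, hs]
  have e2 : HasDerivAt (d2 t T x k) (-(x - k) / (σ ^ 2 * s) - s / 2) σ := by
    refine ((e1.sub ((hasDerivAt_id σ).mul_const s)).congr_deriv ?_).congr_of_eventuallyEq ?_
    · ring
    · exact Eventually.of_forall fun z => by simp [d1, d2, ← hs]; ring
  have key : Real.exp k * phi (d2 t T x k σ) = Real.exp x * phi (d1 t T x k σ) := by
    unfold phi
    rw [mul_left_comm, mul_left_comm (Real.exp x), ← Real.exp_add, ← Real.exp_add]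
    congr 2
    simp only [d1, d2, ← hs]
    field_simp
    ring
  have h1 := ((N_deriv (d1 t T x k σ)).comp σ e1).const_mul (Real.exp x)
  have h2 := ((N_deriv (d2 t T x k σ)).comp σ e2).const_mul (Real.exp k)
  refine (h1.sub h2).congr_deriv ?_
  rw [← mul_assoc, ← mul_assoc, key]; ring

lemma BS_strictMono {t T x k : ℝ} (hT : t < T) : StrictMonoOn (BS t T x k) (Set.Ioi 0) := by
  apply strictMonoOn_of_deriv_pos (convex_Ioi 0)
  · exact fun σ hσ => (BS_deriv hT hσ).continuousAt.continuousWithinAt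
  · intro σ hσ
    rw [interior_Ioi] at hσ
    rw [(BS_deriv hT hσ).deriv]
    have := phi_pos (d1 t T x k σ)
    have : 0 < Real.sqrt (T - t) := Real.sqrt_pos.2 (by linarith)
    positivity

lemma BS_top {t T x k : ℝ} (hT : t < T) :
    Tendsto (BS t T x k) atTop (𝓝 (Real.exp x)) := by
  have hs0 : 0 < Real.sqrt (T - t) := Real.sqrt_pos.2 (by linarith)
  set s := Real.sqrt (T - t) with hs
  have a1 : Tendsto (fun σ : ℝ => σ * s) atTop atTop := tendsto_id.atTop_mul_const hs0
  have a2 : Tendsto (fun σ : ℝ => (x - k) / (σ * s)) atTop (𝓝 0) := tendsto_const_nhds.div_atTop a1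
  have b1 : Tendsto (d1 t T x k) atTop atTop := by
    unfold d1; exact a2.add_atTop (a1.atTop_div_const two_pos)
  have b2 : Tendsto (d2 t T x k) atTop atBot := by
    have := a2.add_atBot (tendsto_neg_atTop_atBot.comp (a1.atTop_div_const two_pos))
    exact this
  have := ((N_top.comp b1).const_mul (Real.exp x)).sub ((N_bot.comp b2).const_mul (Real.exp k))
  unfold BS; simpa [Function.comp_def] using this

lemma BS_zero {t T x k : ℝ} (hT : t < T) :
    Tendsto (BS t T x k) (𝓝[>] 0) (𝓝 (max (Real.exp x - Real.exp k) 0)) := by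
  have hs0 : 0 < Real.sqrt (T - t) := Real.sqrt_pos.2 (by linarith)
  set s := Real.sqrt (T - t) with hs
  have a0 : Tendsto (fun σ : ℝ => σ * s) (𝓝[>] 0) (𝓝 0) := by
    have : Tendsto (fun σ : ℝ => σ * s) (𝓝 0) (𝓝 (0 * s)) := by
      apply Continuous.tendsto; fun_prop
    rw [zero_mul] at this
    exact this.mono_left nhdsWithin_le_nhds
  have a1 : Tendsto (fun σ : ℝ => σ * s) (𝓝[>] 0) (𝓝[>] 0) := by
    refine tendsto_nhdsWithin_iff.2 ⟨a0, ?_⟩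
    filter_upwards [self_mem_nhdsWithin] with σ hσ
    exact mul_pos hσ hs0
  have a2 : Tendsto (fun σ : ℝ => (σ * s)⁻¹) (𝓝[>] 0) atTop := tendsto_inv_nhdsGT_zero.comp a1
  have a3 : Tendsto (fun σ : ℝ => σ * s / 2) (𝓝[>] 0) (𝓝 0) := by simpa using a0.div_const 2
  have a3' : Tendsto (fun σ : ℝ => - (σ * s / 2)) (𝓝[>] 0) (𝓝 0) := by simpa using a3.neg
  rcases lt_trichotomy x k with h | h | h
  · have c : Tendsto (fun σ : ℝ => (x - k) / (σ * s)) (𝓝[>] 0) atBot := by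
      simp only [div_eq_mul_inv]
      exact a2.const_mul_atTop_of_neg (by linarith)
    have b1 : Tendsto (d1 t T x k) (𝓝[>] 0) atBot := c.atBot_add a3
    have b2 : Tendsto (d2 t T x k) (𝓝[>] 0) atBot := c.atBot_add a3'
    have := ((N_bot.comp b1).const_mul (Real.exp x)).sub ((N_bot.comp b2).const_mul (Real.exp k))
    rw [max_eq_right (by have := Real.exp_le_exp.2 h.le; linarith)]
    unfold BS; simpa [Function.comp_def] using this
  · subst h
    have b1 : Tendsto (d1 t T x x) (𝓝[>] 0) (𝓝 0) := by
      unfold d1; simpa using a3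
    have b2 : Tendsto (d2 t T x x) (𝓝[>] 0) (𝓝 0) := by
      unfold d2; simpa using a3'
    have n0 := (N_deriv 0).continuousAt.tendsto
    have := ((n0.comp b1).const_mul (Real.exp x)).sub ((n0.comp b2).const_mul (Real.exp x))
    unfold BS; simpa [Function.comp_def] using this
  · have c : Tendsto (fun σ : ℝ => (x - k) / (σ * s)) (𝓝[>] 0) atTop := by
      simp only [div_eq_mul_inv]
      exact a2.const_mul_atTop (by linarith)
    have b1 : Tendsto (d1 t T x k) (𝓝[>] 0) atTop := c.atTop_add a3
    have b2 : Tendsto (d2 t T x k) (𝓝[>] 0) atTop := c.atTop_add a3'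
    have := ((N_top.comp b1).const_mul (Real.exp x)).sub ((N_top.comp b2).const_mul (Real.exp k))
    rw [max_eq_left (by have := Real.exp_le_exp.2 h.le; linarith)]
    unfold BS; simpa [Function.comp_def] using this

/-- the open interval of admissible prices -/
def UU (x k : ℝ) : Set ℝ := Set.Ioo (max (Real.exp x - Real.exp k) 0) (Real.exp x)

lemma BS_image {t T x k : ℝ} (hT : t < T) : BS t T x k '' Set.Ioi 0 = UU x k := by
  have hm := BS_strictMono (x := x) (k := k) hT
  apply Set.Subset.antisymm
  · rintro _ ⟨σ, hσ, rfl⟩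
    have hσ' : (0:ℝ) < σ := hσ
    constructor
    · refine lt_of_le_of_lt (b := BS t T x k (σ / 2)) ?_
        (hm (by simpa using hσ') hσ (by linarith))
      refine le_of_tendsto (BS_zero hT) ?_
      filter_upwards [Ioo_mem_nhdsGT (show (0:ℝ) < σ / 2 by linarith)] with z hz
      exact (hm hz.1 (by simpa using hσ') hz.2).le
    · refine lt_of_lt_of_le (b := BS t T x k (σ + 1))
        (hm hσ (show (0:ℝ) < σ + 1 by linarith) (by linarith)) ?_
      refine ge_of_tendsto (BS_top (k := k) hT) ?_
      filter_upwards [eventually_ge_atTop (σ + 1)] with z hz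
      exact hm.monotoneOn (show (0:ℝ) < σ + 1 by linarith) (show (0:ℝ) < z by linarith) hz
  · intro l hl
    have hc : ContinuousOn (BS t T x k) (Set.Ioi 0) :=
      fun σ hσ => (BS_deriv hT hσ).continuousAt.continuousWithinAt
    obtain ⟨u, hu1, hu2⟩ := (((BS_zero hT).eventually (gt_mem_nhds hl.1)).and
      self_mem_nhdsWithin).exists
    obtain ⟨v, hv1, hv2⟩ := (((BS_top hT).eventually (lt_mem_nhds hl.2)).and
      (eventually_gt_atTop 0)).exists
    exact (isPreconnected_Ioi.intermediate_value hu2 hv2 hc) ⟨hu1.le, hv1.le⟩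

lemma BSinv_pos {t T x k l : ℝ} (hT : t < T) (hl : l ∈ UU x k) : 0 < BSinv t T x k l := by
  rw [← BS_image hT] at hl
  exact Function.invFunOn_mem hl

lemma BS_BSinv {t T x k l : ℝ} (hT : t < T) (hl : l ∈ UU x k) :
    BS t T x k (BSinv t T x k l) = l := by
  rw [← BS_image hT] at hl
  exact Function.invFunOn_eq hl

lemma BSinv_BS {t T x k σ : ℝ} (hT : t < T) (hσ : 0 < σ) :
    BSinv t T x k (BS t T x k σ) = σ :=
  (BS_strictMono hT).injOn.leftInvOn_invFunOn hσ

lemma UU_nhds {x k l : ℝ} (hl : l ∈ UU x k) : UU x k ∈ 𝓝 l := isOpen_Ioo.mem_nhds hl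

lemma BSinv_deriv {t T x k l : ℝ} (hT : t < T) (hl : l ∈ UU x k) :
    HasDerivAt (BSinv t T x k)
      (Real.exp x * phi (d1 t T x k (BSinv t T x k l)) * Real.sqrt (T - t))⁻¹ l := by
  have hp := BSinv_pos hT hl
  have hmono : StrictMonoOn (BSinv t T x k) (UU x k) := by
    intro p hp q hq hpq
    rw [← (BS_strictMono (x := x) (k := k) hT).lt_iff_lt (BSinv_pos hT hp) (BSinv_pos hT hq),
      BS_BSinv hT hp, BS_BSinv hT hq]
    exact hpq
  have hc : ContinuousAt (BSinv t T x k) l := by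
    refine hmono.continuousAt_of_image_mem_nhds (UU_nhds hl) ?_
    refine mem_of_superset (Ioi_mem_nhds hp) ?_
    intro σ hσ
    refine ⟨BS t T x k σ, ?_, BSinv_BS hT hσ⟩
    rw [← BS_image hT]; exact ⟨σ, hσ, rfl⟩
  refine HasDerivAt.of_local_left_inverse hc (BS_deriv hT hp) ?_ ?_
  · have := phi_pos (d1 t T x k (BSinv t T x k l))
    have : 0 < Real.sqrt (T - t) := Real.sqrt_pos.2 (by linarith)
    positivity
  · filter_upwards [UU_nhds hl] with p hp
    exact BS_BSinv hT hp

/-- Polynomial expressions in `q, S, σ, σ⁻¹`. -/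
inductive Good : (ℝ → ℝ → ℝ → ℝ) → Prop
  | const (c : ℝ) : Good (fun _ _ _ => c)
  | q : Good (fun q _ _ => q)
  | S : Good (fun _ S _ => S)
  | id : Good (fun _ _ σ => σ)
  | inv : Good (fun _ _ σ => σ⁻¹)
  | add {f g} : Good f → Good g → Good (fun q S σ => f q S σ + g q S σ)
  | mul {f g} : Good f → Good g → Good (fun q S σ => f q S σ * g q S σ)

lemma Good.deriv {R} (h : Good R) : ∃ R', Good R' ∧ ∀ q S σ, 0 < σ →
    HasDerivAt (R q S) (R' q S σ) σ := by
  induction h with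
  | const c => exact ⟨_, .const 0, fun q S σ h => hasDerivAt_const _ _⟩
  | q => exact ⟨_, .const 0, fun q S σ h => hasDerivAt_const _ _⟩
  | S => exact ⟨_, .const 0, fun q S σ h => hasDerivAt_const _ _⟩
  | id => exact ⟨_, .const 1, fun q S σ h => hasDerivAt_id _⟩
  | inv =>
    refine ⟨_, .mul (.const (-1)) (.mul .inv .inv), fun q S σ h => ?_⟩
    refine (hasDerivAt_inv h.ne').congr_deriv ?_
    field_simp
  | add hf hg ihf ihg =>
    obtain ⟨f', hf', hf''⟩ := ihf
    obtain ⟨g', hg', hg''⟩ := ihg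
    exact ⟨_, .add hf' hg', fun q S σ h => (hf'' q S σ h).add (hg'' q S σ h)⟩
  | mul hf hg ihf ihg =>
    obtain ⟨f', hf', hf''⟩ := ihf
    obtain ⟨g', hg', hg''⟩ := ihg
    exact ⟨_, .add (.mul hf' hg) (.mul hf hg'), fun q S σ h => (hf'' q S σ h).mul (hg'' q S σ h)⟩

lemma Good.bound {R} (h : Good R) (a b : ℝ) (ha : 0 < a) : ∃ M, ∀ q S σ, |q| ≤ b ^ 2 / 2 → |S| ≤ 1 →
    σ ∈ Set.Icc a b → |R q S σ| ≤ M := by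
  induction h with
  | const c => exact ⟨|c|, fun q S σ _ _ _ => le_rfl⟩
  | q => exact ⟨_, fun q S σ h _ _ => h⟩
  | S => exact ⟨_, fun q S σ _ h _ => h⟩
  | id => exact ⟨b, fun q S σ _ _ h => abs_le.2 ⟨by linarith [h.1, h.2], h.2⟩⟩
  | inv =>
    refine ⟨a⁻¹, fun q S σ _ _ h => ?_⟩
    have : 0 < σ := ha.trans_le h.1
    rw [abs_of_pos (by positivity)]
    exact inv_anti₀ ha h.1
  | add hf hg ihf ihg =>
    obtain ⟨A, hA⟩ := ihf
    obtain ⟨B, hB⟩ := ihg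
    exact ⟨A + B, fun q S σ h1 h2 h3 =>
      (abs_add_le _ _).trans (add_le_add (hA _ _ _ h1 h2 h3) (hB _ _ _ h1 h2 h3))⟩
  | mul hf hg ihf ihg =>
    obtain ⟨A, hA⟩ := ihf
    obtain ⟨B, hB⟩ := ihg
    refine ⟨A * B, fun q S σ h1 h2 h3 => ?_⟩
    rw [abs_mul]
    exact mul_le_mul (hA _ _ _ h1 h2 h3) (hB _ _ _ h1 h2 h3) (abs_nonneg _)
      ((abs_nonneg _).trans (hA _ _ _ h1 h2 h3))

/-- exponent of the inverse vega -/
def PP (q _S σ : ℝ) : ℝ := 1 / 2 * ((q * σ⁻¹ + 1 / 2 * σ) * (q * σ⁻¹ + 1 / 2 * σ))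

lemma PP_good : Good PP :=
  .mul (.const (1 / 2)) (.mul (.add (.mul .q .inv) (.mul (.const (1 / 2)) .id))
    (.add (.mul .q .inv) (.mul (.const (1 / 2)) .id)))

/-- inverse vega -/
def FF (t T x k σ : ℝ) : ℝ :=
  Real.sqrt (2 * Real.pi) * Real.exp (-x) * (Real.sqrt (T - t))⁻¹ *
    Real.exp ((T - t) * PP ((x - k) / (T - t)) (T - t) σ)

lemma FF_eq {t T x k σ : ℝ} (hT : t < T) (hσ : 0 < σ) :
    (Real.exp x * phi (d1 t T x k σ) * Real.sqrt (T - t))⁻¹ = FF t T x k σ := by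
  have hs0 : 0 < Real.sqrt (T - t) := Real.sqrt_pos.2 (by linarith)
  have hsq : T - t = Real.sqrt (T - t) ^ 2 := (Real.sq_sqrt (by linarith)).symm
  unfold FF phi
  have : (T - t) * PP ((x - k) / (T - t)) (T - t) σ = - (-(d1 t T x k σ) ^ 2 / 2) := by
    unfold PP d1
    generalize Real.sqrt (T - t) = s at *
    rw [hsq]
    field_simp
  rw [this, Real.exp_neg, Real.exp_neg, mul_inv, mul_inv, mul_inv, inv_inv]
  ring

lemma main_formula (n : ℕ) : ∃ R, Good R ∧ ∀ t T x k l : ℝ, t < T → l ∈ UU x k →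
    iteratedDeriv (n + 2) (BSinv t T x k) l =
      FF t T x k (BSinv t T x k l) ^ (n + 2) * (T - t) *
        R ((x - k) / (T - t)) (T - t) (BSinv t T x k l) := by
  obtain ⟨P', hP', hP''⟩ := PP_good.deriv
  have hF : ∀ t T x k σ : ℝ, 0 < σ → HasDerivAt (FF t T x k)
      (FF t T x k σ * ((T - t) * P' ((x - k) / (T - t)) (T - t) σ)) σ := by
    intro t T x k σ hσ
    unfold FF
    refine ((((hP'' ((x - k) / (T - t)) (T - t) σ hσ).const_mul (T - t)).exp).const_mul
      _).congr_deriv ?_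
    ring
  have hB : ∀ t T x k l : ℝ, t < T → l ∈ UU x k → HasDerivAt (BSinv t T x k)
      (FF t T x k (BSinv t T x k l)) l := by
    intro t T x k l hT hl
    exact (BSinv_deriv hT hl).congr_deriv (FF_eq hT (BSinv_pos hT hl))
  induction n with
  | zero =>
    refine ⟨P', hP', fun t T x k l hT hl => ?_⟩
    have e : iteratedDeriv 1 (BSinv t T x k) =ᶠ[𝓝 l] fun p => FF t T x k (BSinv t T x k p) := by
      filter_upwards [UU_nhds hl] with p hp
      rw [iteratedDeriv_one]; exact (hB t T x k p hT hp).deriv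
    rw [zero_add, iteratedDeriv_succ, e.deriv_eq]
    have := (hF t T x k _ (BSinv_pos hT hl)).comp l (hB t T x k l hT hl)
    refine this.deriv.trans ?_
    ring
  | succ n ih =>
    obtain ⟨R, hR, hRf⟩ := ih
    obtain ⟨R', hR', hR''⟩ := hR.deriv
    refine ⟨_, .add hR' (.mul (.const (n + 2)) (.mul .S (.mul hP' hR))), fun t T x k l hT hl => ?_⟩
    have e : iteratedDeriv (n + 2) (BSinv t T x k) =ᶠ[𝓝 l] fun p =>
      FF t T x k (BSinv t T x k p) ^ (n + 2) * (T - t) *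
        R ((x - k) / (T - t)) (T - t) (BSinv t T x k p) := by
      filter_upwards [UU_nhds hl] with p hp using hRf t T x k p hT hp
    rw [show n + 1 + 2 = (n + 2) + 1 by ring, iteratedDeriv_succ, e.deriv_eq]
    have hp := BSinv_pos hT hl
    have h1 := ((((hF t T x k _ hp).fun_pow (n + 2)).mul_const (T - t)).fun_mul
      (hR'' ((x - k) / (T - t)) (T - t) _ hp)).comp l (hB t T x k l hT hl)
    refine h1.deriv.trans ?_
    simp only [Nat.add_sub_cancel, show n + 2 - 1 = n + 1 by omega]
    push_cast
    ring

lemma main_bound (a b x : ℝ) (ha : 0 < a) (n : ℕ) :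
    ∃ C > 0, ∀ t T k l : ℝ, t < T → T - t ≤ 1 →
      |x - k| ≤ b ^ 2 * (T - t) / 2 → l ∈ UU x k →
      BSinv t T x k l ∈ Set.Icc a b →
        |iteratedDeriv (n + 2) (BSinv t T x k) l| ≤
          C * (T - t) ^ (-((n : ℝ) / 2)) := by
  obtain ⟨R, hR, hRf⟩ := main_formula n
  obtain ⟨B, hB⟩ := hR.bound a b ha
  obtain ⟨M, hM⟩ := PP_good.bound a b ha
  refine ⟨(Real.sqrt (2 * Real.pi) * Real.exp (-x) * Real.exp |M|) ^ (n + 2) * (|B| + 1),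
    by positivity, fun t T k l hT h1 hk hl hσ => ?_⟩
  have hτ : 0 < T - t := by linarith
  have hq : |(x - k) / (T - t)| ≤ b ^ 2 / 2 := by
    rw [abs_div, abs_of_pos hτ, div_le_iff₀ hτ]; linarith
  have hS : |T - t| ≤ 1 := by rwa [abs_of_pos hτ]
  rw [hRf t T x k l hT hl]
  have hs0 : 0 < Real.sqrt (T - t) := Real.sqrt_pos.2 hτ
  have b1 := hB _ _ _ hq hS hσ
  have b2 := hM _ _ _ hq hS hσ
  have hE : (T - t) * PP ((x - k) / (T - t)) (T - t) (BSinv t T x k l) ≤ |M| := by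
    have h3 := b2.trans (le_abs_self M)
    have h4 := (le_abs_self _).trans h3
    nlinarith [abs_nonneg M]
  have hFle : FF t T x k (BSinv t T x k l) ≤
      Real.sqrt (2 * Real.pi) * Real.exp (-x) * Real.exp |M| * (Real.sqrt (T - t))⁻¹ := by
    unfold FF
    have := Real.exp_le_exp.2 hE
    rw [mul_right_comm _ (Real.exp |M|)]
    gcongr
  have hF0 : 0 < FF t T x k (BSinv t T x k l) := by unfold FF; positivity
  have hpw : (Real.sqrt (T - t))⁻¹ ^ (n + 2) * (T - t) = (T - t) ^ (-((n : ℝ) / 2)) := by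
    have hpr : (T - t) ^ (-((n : ℝ) / 2)) = (Real.sqrt (T - t))⁻¹ ^ n := by
      rw [Real.sqrt_eq_rpow, ← Real.rpow_neg hτ.le, ← Real.rpow_natCast, ← Real.rpow_mul hτ.le]
      congr 1; ring
    rw [hpr, pow_add, mul_assoc]
    nth_rewrite 3 [← Real.sq_sqrt hτ.le]
    field_simp
  rw [abs_mul, abs_mul, abs_of_pos hτ, abs_of_pos (pow_pos hF0 _), ← hpw]
  calc _ ≤ (Real.sqrt (2 * Real.pi) * Real.exp (-x) * Real.exp |M| * (Real.sqrt (T - t))⁻¹) ^ (n + 2)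
        * (T - t) * (|B| + 1) := by
        gcongr
        linarith [le_abs_self B]
    _ = _ := by rw [mul_pow]; ring

theorem bsinv_higher_derivative_bounds (a b x : ℝ) (ha : 0 < a) (hab : a ≤ b) :
    ∃ C > 0, ∀ t T k l : ℝ, t < T → T - t ≤ 1 →
      |x - k| ≤ b ^ 2 * (T - t) / 2 →
      l ∈ Set.Ioo (max (Real.exp x - Real.exp k) 0) (Real.exp x) →
      BSinv t T x k l ∈ Set.Icc a b →
      ∀ n ∈ ({4, 5, 6} : Set ℕ),
        |iteratedDeriv n (fun p => BSinv t T x k p) l| ≤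
          C * (T - t) ^ (-(((n : ℝ) - 2) / 2)) := by
  choose C hC0 hC using main_bound a b x ha
  refine ⟨C 2 + C 3 + C 4, by have := hC0 2; have := hC0 3; have := hC0 4; positivity,
    fun t T k l hT h1 hk hl hσ n hn => ?_⟩
  have hτ : 0 < T - t := by linarith
  have c2 := hC0 2
  have c3 := hC0 3
  have c4 := hC0 4
  have key : ∀ m : ℕ, n = m + 2 → C m ≤ C 2 + C 3 + C 4 →
      |iteratedDeriv n (fun p => BSinv t T x k p) l| ≤
          (C 2 + C 3 + C 4) * (T - t) ^ (-(((n : ℝ) - 2) / 2)) := by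
    rintro m rfl hm
    have h := hC m t T k l hT h1 hk hl hσ
    push_cast
    rw [add_sub_cancel_right]
    refine h.trans ?_
    gcongr
  rcases hn with rfl | rfl | rfl
  · exact key 2 rfl (by linarith)
  · exact key 3 rfl (by linarith)
  · exact key 4 rfl (by linarith)
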